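/- arXiv:2102.03743 — 2 statements merged into one kernel-verified Lean document; each statement's English description precedes it below -/
import Mathlib

section
/- For integers 1 ≤ k ≤ m, the limit as σ → 0⁺ of σ^{−k}·C(m,k;σ) equals |s(m,k)|, the signless Stirling number of the first kind, i.e. the coefficient of x^k in the polynomial x(x+1)⋯(x+m−1). -/
/-- Rising factorial `(x)_(n) = x (x+1) ⋯ (x+n-1)`, with `(x)_(0) = 1`. -/
def risingFactorial (x : ℝ) : ℕ → ℝ
  | 0 => 1
  | n + 1 => risingFactorial x n * (x + n)

/-- Generalized factorial coefficient
`C(m,k;σ) = (1/k!) ∑_{i=0}^k (-1)^i binom(k,i) (-iσ)_(m)`. -/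
noncomputable def genFactCoeff (m k : ℕ) (σ : ℝ) : ℝ :=
  (1 / (k.factorial : ℝ)) *
    ∑ i ∈ Finset.range (k + 1),
      (-1 : ℝ) ^ i * (k.choose i : ℝ) * risingFactorial (-(i : ℝ) * σ) m

/-!
The alternating sum in `C(m,k;σ)` is, up to the sign `(-1)^k`, the `k`-th forward difference with
step `-σ` at `0` of the polynomial `x (x+1) ⋯ (x+m-1)`. For any polynomial, the `k`-th difference
with step `h` at `0` is `h^k` times a polynomial in `h`: on `x^n` it is homogeneous of degree `n` in
`h`, and it vanishes for `n < k`. The cofactor takes the value `k!` times the coefficient of `x^k`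
at `h = 0`, since the `k`-th difference of `x^k` with step `1` is `k!`.
-/

open Filter Polynomial Topology
open scoped fwdDiff Nat

theorem factorial_mul_coeff_taylor {R : Type*} [Semiring R] (p : R[X]) (y : R) (k : ℕ) :
    k ! * (taylor y p).coeff k = (derivative^[k] p).eval y := by
  rw [taylor_coeff, ← factorial_smul_hasseDeriv, LinearMap.smul_apply, eval_smul, nsmul_eq_mul]

theorem fwdDiff_iter_apply_mul_left {R G : Type*} [NonAssocSemiring R] [AddCommGroup G]
    (f : R → G) (h y : R) (k : ℕ) :
    (Δ_[h])^[k] f (h * y) = (Δ_[1])^[k] (fun r ↦ f (h * r)) y := by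
  simp only [fwdDiff_iter_eq_sum_shift, mul_add, mul_smul_comm, mul_one]

section CommRing

variable {R : Type*} [CommRing R]

theorem fwdDiff_iter_pow_apply_zero (n k : ℕ) (h : R) :
    (Δ_[h])^[k] (fun r ↦ r ^ n) 0 = h ^ n * (Δ_[1])^[k] (fun r : R ↦ r ^ n) 0 :=
  calc (Δ_[h])^[k] (fun r ↦ r ^ n) 0
      = (Δ_[1])^[k] (h ^ n • fun r ↦ r ^ n) 0 := by
        simpa [Pi.smul_def, mul_pow] using fwdDiff_iter_apply_mul_left (fun r ↦ r ^ n) h 0 k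
    _ = h ^ n * (Δ_[1])^[k] (fun r : R ↦ r ^ n) 0 := by
        rw [fwdDiff_iter_const_smul, Pi.smul_apply, smul_eq_mul]

theorem fwdDiff_iter_eval_monomial_zero (n k : ℕ) (a h : R) :
    (Δ_[h])^[k] (monomial n a).eval 0 = a * h ^ n * (Δ_[1])^[k] (fun r : R ↦ r ^ n) 0 := by
  have heval : (monomial n a).eval = a • fun r : R ↦ r ^ n := funext fun _ ↦ eval_monomial
  rw [heval, fwdDiff_iter_const_smul, Pi.smul_apply, smul_eq_mul, fwdDiff_iter_pow_apply_zero,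
    mul_assoc]

theorem exists_fwdDiff_iter_eval_monomial_zero_eq_pow_mul_eval (n k : ℕ) (a : R) :
    ∃ q : R[X], q.eval 0 = k ! * (monomial n a).coeff k ∧
      ∀ h : R, (Δ_[h])^[k] (monomial n a).eval 0 = h ^ k * q.eval h := by
  simp only [fwdDiff_iter_eval_monomial_zero]
  obtain hnk | ⟨d, rfl⟩ := (lt_or_ge n k).imp_right Nat.exists_eq_add_of_le
  · exact ⟨0, by simp [coeff_monomial_of_ne _ hnk.ne'],
      fun h ↦ by simp [fwdDiff_iter_pow_eq_zero_of_lt hnk]⟩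
  · refine ⟨monomial d (a * (Δ_[1])^[k] (fun r : R ↦ r ^ (k + d)) 0), ?_, fun h ↦ ?_⟩
    · rcases d.eq_zero_or_pos with rfl | hd
      · simp [fwdDiff_iter_eq_factorial, mul_comm]
      · simp [coeff_monomial, hd.ne']
    · rw [eval_monomial]
      ring

theorem exists_fwdDiff_iter_eval_zero_eq_pow_mul_eval (p : R[X]) (k : ℕ) :
    ∃ q : R[X], q.eval 0 = k ! * p.coeff k ∧
      ∀ h : R, (Δ_[h])^[k] p.eval 0 = h ^ k * q.eval h := by
  induction p using Polynomial.induction_on' with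
  | add p₁ p₂ ih₁ ih₂ =>
    obtain ⟨q₁, hq₁, hdiff₁⟩ := ih₁
    obtain ⟨q₂, hq₂, hdiff₂⟩ := ih₂
    have heval : (p₁ + p₂).eval = p₁.eval + p₂.eval := funext fun _ ↦ eval_add
    refine ⟨q₁ + q₂, by rw [eval_add, hq₁, hq₂, coeff_add, mul_add], fun h ↦ ?_⟩
    rw [heval, fwdDiff_iter_add, Pi.add_apply, hdiff₁, hdiff₂, eval_add, mul_add]
  | monomial n a => exact exists_fwdDiff_iter_eval_monomial_zero_eq_pow_mul_eval n k a

theorem fwdDiff_iter_eval_taylor_zero (p : R[X]) (h y : R) (k : ℕ) :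
    (Δ_[h])^[k] (taylor y p).eval 0 = (Δ_[h])^[k] p.eval y := by
  simpa [taylor_eval] using fwdDiff_iter_comp_add h p.eval y k 0

end CommRing

theorem tendsto_fwdDiff_iter_eval_div_pow {K : Type*} [Field K] [TopologicalSpace K]
    [IsTopologicalSemiring K] (p : K[X]) (y : K) (k : ℕ) :
    Tendsto (fun h ↦ (Δ_[h])^[k] p.eval y / h ^ k) (𝓝[≠] 0) (𝓝 ((derivative^[k] p).eval y)) := by
  obtain ⟨q, hq, hdiff⟩ := exists_fwdDiff_iter_eval_zero_eq_pow_mul_eval (taylor y p) k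
  rw [← factorial_mul_coeff_taylor, ← hq]
  refine q.continuousAt.continuousWithinAt.tendsto.congr' ?_
  filter_upwards [self_mem_nhdsWithin] with h hh
  rw [← fwdDiff_iter_eval_taylor_zero, hdiff, mul_div_cancel_left₀ _ (pow_ne_zero k hh)]

theorem risingFactorial_eq_eval_ascPochhammer (x : ℝ) (n : ℕ) :
    risingFactorial x n = (ascPochhammer ℝ n).eval x := by
  induction n with
  | zero => simp [risingFactorial]
  | succ n ih => rw [risingFactorial, ih, ascPochhammer_succ_eval]

theorem genFactCoeff_eq_fwdDiff_iter (m k : ℕ) (σ : ℝ) :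
    genFactCoeff m k σ = (-1) ^ k * (Δ_[-σ])^[k] (ascPochhammer ℝ m).eval 0 / k ! := by
  rw [genFactCoeff, one_div_mul_eq_div, fwdDiff_iter_eq_sum_shift, Finset.mul_sum]
  congr 1
  refine Finset.sum_congr rfl fun i hi ↦ ?_
  have hsign : (-1 : ℝ) ^ i = (-1) ^ k * (-1) ^ (k - i) := by
    have hik : i ≤ k := Finset.mem_range_succ_iff.mp hi
    rw [← pow_add]
    exact neg_one_pow_congr (by grind)
  rw [risingFactorial_eq_eval_ascPochhammer, hsign, zero_add, nsmul_eq_mul, zsmul_eq_mul,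
    neg_mul_comm]
  push_cast
  ring

theorem zpow_neg_mul_genFactCoeff (m k : ℕ) (σ : ℝ) :
    σ ^ (-(k : ℤ)) * genFactCoeff m k σ =
      (Δ_[-σ])^[k] (ascPochhammer ℝ m).eval 0 / (-σ) ^ k / k ! := by
  have hinv : ((-σ) ^ k)⁻¹ = (-1) ^ k * (σ ^ k)⁻¹ := by
    rw [← inv_pow, inv_neg, neg_pow, inv_pow]
  rw [genFactCoeff_eq_fwdDiff_iter, zpow_neg, zpow_natCast, div_eq_mul_inv _ ((-σ) ^ k), hinv]
  ring

theorem stmt2_general (m k : ℕ) :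
    Tendsto (fun σ : ℝ ↦ σ ^ (-(k : ℤ)) * genFactCoeff m k σ) (𝓝[≠] 0)
      (𝓝 ((ascPochhammer ℝ m).coeff k)) := by
  have hneg : Tendsto (fun σ : ℝ ↦ -σ) (𝓝[≠] 0) (𝓝[≠] 0) := by
    simpa using (hasDerivAt_neg (0 : ℝ)).tendsto_nhdsNE (by norm_num)
  have hcoeff :
      (derivative^[k] (ascPochhammer ℝ m)).eval 0 / k ! = (ascPochhammer ℝ m).coeff k := by
    rw [← factorial_mul_coeff_taylor, taylor_zero, mul_div_cancel_left₀ _ (by positivity)]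
  rw [← hcoeff]
  simp only [zpow_neg_mul_genFactCoeff]
  exact ((tendsto_fwdDiff_iter_eval_div_pow (ascPochhammer ℝ m) 0 k).comp hneg).div_const _

/-- As `σ → 0⁺`, `σ^{-k} C(m,k;σ)` converges to the signless Stirling number of the
first kind `|s(m,k)|`, i.e. the coefficient of `x^k` in `x (x+1) ⋯ (x+m-1)`. -/
theorem stmt2 (m k : ℕ) (hk : 1 ≤ k) (hkm : k ≤ m) :
    Filter.Tendsto (fun σ : ℝ => σ ^ (-(k : ℤ)) * genFactCoeff m k σ)
      (nhdsWithin 0 (Set.Ioi 0))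
      (nhds ((ascPochhammer ℝ m).coeff k)) := by
  exact (stmt2_general m k).mono_left (nhdsGT_le_nhdsNE 0)
end

section
/- Let α > 0 and let m ≥ 1 be an integer. Then Σ_{k=1}^{m} V^{1/2}_{m+1,k+1}(α)·2^{k}·C(m,k;1/2) = (1/(2√π))·∫_0^∞ ∫_0^1 h^{−1/2}·f_{1/2}(h·p)·exp(−h·α² + α)·p^{m}·(1−p)^{−1/2} dp dh, where both sides are the probability that a new token is a previously unseen symbol under the normalized generalized gamma process with σ = 1/2. -/
open MeasureTheory

/-- The NGGP weight `V_{m,k}` with stability parameter `σ = 1/2`: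
`V^{1/2}_{m,k}(α) = ((α/√2)^k/Γ(m)) ∫_0^∞ x^{m−1} (1/2+x)^{−(m−k/2)} e^{−α(√(1+2x)−1)} dx`. -/
noncomputable def Vhalf (m k : ℕ) (α : ℝ) : ℝ :=
  ((α / Real.sqrt 2) ^ k / Real.Gamma m) *
    ∫ x in Set.Ioi (0 : ℝ),
      x ^ (m - 1) * ((1 / 2 : ℝ) + x) ^ (-((m : ℝ) - (k : ℝ) / 2)) *
        Real.exp (-α * (Real.sqrt (1 + 2 * x) - 1))

/-- The positive `1/2`-stable density `f_{1/2}(x) = (1/(2√π)) x^{−3/2} e^{−1/(4x)}`. -/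
noncomputable def fHalf (x : ℝ) : ℝ :=
  (1 / (2 * Real.sqrt Real.pi)) * x ^ (-(3 / 2) : ℝ) * Real.exp (-1 / (4 * x))

/-!
The Laplace transform of `f_{1/2}` is `exp (-√t)`, and the coefficients `C(m, k; σ)` are exactly
those appearing in the `m`-th derivative of `exp (-t ^ σ)`. Substituting `y = 2x` in the weights
therefore turns the sum over `k` into an integral over `y` of `m`-th moments of the exponentially
tilted `1/2`-stable law; exchanging the two integrals leaves, for each point `s` of that law, a
Tricomi integral with parameters `(m + 1, 1/2)`.

On the other side, in the coordinates `s = h p` and `r = 1 / p - 1`, the integral over `r` is the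
Tricomi integral with parameters `(1/2, m + 1)`. Kummer's transformation, i.e. the symmetry of
`y ^ (a - 1) r ^ (b - 1) exp (-t (y + r + y r))` under `(a, y) ↔ (b, r)`, identifies the two.
-/

open Filter ProbabilityTheory Real Set Topology
open scoped ENNReal NNReal

section GenFactCoeff

lemma risingFactorial_zero_succ (n : ℕ) : risingFactorial 0 (n + 1) = 0 := by
  induction n with
  | zero => simp [risingFactorial]
  | succ n ih => rw [risingFactorial, ih, zero_mul]

lemma genFactCoeff_succ_zero (m : ℕ) (σ : ℝ) : genFactCoeff (m + 1) 0 σ = 0 := by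
  simp [genFactCoeff, risingFactorial_zero_succ]

lemma genFactCoeff_zero_succ (k : ℕ) (σ : ℝ) : genFactCoeff 0 (k + 1) σ = 0 := by
  have h : ∑ i ∈ Finset.range (k + 2), (-1 : ℝ) ^ i * ((k + 1).choose i : ℝ) = 0 := by
    exact_mod_cast Int.alternating_sum_range_choose_of_ne k.succ_ne_zero
  simp [genFactCoeff, risingFactorial, h]

lemma genFactCoeff_succ_succ (m k : ℕ) (σ : ℝ) :
    genFactCoeff (m + 1) (k + 1) σ =
      (m - (k + 1) * σ) * genFactCoeff m (k + 1) σ + σ * genFactCoeff m k σ := by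
  have hext : ∑ i ∈ Finset.range (k + 1),
        (-1 : ℝ) ^ i * (k.choose i : ℝ) * risingFactorial (-(i : ℝ) * σ) m =
      ∑ i ∈ Finset.range (k + 2),
        (-1 : ℝ) ^ i * (k.choose i : ℝ) * risingFactorial (-(i : ℝ) * σ) m := by
    simp [Finset.sum_range_succ _ (k + 1)]
  have hsum : ∑ i ∈ Finset.range (k + 2),
        (-1 : ℝ) ^ i * ((k + 1).choose i : ℝ) * risingFactorial (-(i : ℝ) * σ) (m + 1) =
      (m - (k + 1) * σ) * ∑ i ∈ Finset.range (k + 2),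
        (-1 : ℝ) ^ i * ((k + 1).choose i : ℝ) * risingFactorial (-(i : ℝ) * σ) m +
      σ * (k + 1) * ∑ i ∈ Finset.range (k + 1),
        (-1 : ℝ) ^ i * (k.choose i : ℝ) * risingFactorial (-(i : ℝ) * σ) m := by
    rw [hext, Finset.mul_sum, Finset.mul_sum, ← Finset.sum_add_distrib]
    refine Finset.sum_congr rfl fun i hi => ?_
    have hchoose : (k.choose i : ℝ) * (k + 1) = (k + 1).choose i * (k + 1 - i) := by
      have h := congrArg (Nat.cast (R := ℝ)) (Nat.choose_mul_succ_eq k i)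
      rwa [Nat.cast_mul, Nat.cast_mul, Nat.cast_sub (Finset.mem_range_succ_iff.1 hi),
        Nat.cast_succ] at h
    rw [risingFactorial]
    linear_combination -((-1) ^ i * risingFactorial (-(i : ℝ) * σ) m * σ * hchoose)
  simp only [genFactCoeff, hsum, Nat.factorial_succ, Nat.cast_mul, Nat.cast_succ]
  field_simp

lemma genFactCoeff_eq_zero_of_lt {m k : ℕ} (h : m < k) (σ : ℝ) : genFactCoeff m k σ = 0 := by
  obtain ⟨k, rfl⟩ := Nat.exists_eq_add_one_of_ne_zero h.ne_bot
  induction m generalizing k with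
  | zero => exact genFactCoeff_zero_succ k σ
  | succ m ih =>
    obtain ⟨j, rfl⟩ := Nat.exists_eq_add_one_of_ne_zero (show k ≠ 0 by lia)
    rw [genFactCoeff_succ_succ, ih _ (by lia), ih _ (by lia), mul_zero, mul_zero, add_zero]

lemma sum_genFactCoeff_succ_mul (m : ℕ) (σ : ℝ) (T : ℕ → ℝ) :
    ∑ k ∈ Finset.range (m + 2), genFactCoeff (m + 1) k σ * T k =
      ∑ k ∈ Finset.range (m + 1), genFactCoeff m k σ * (σ * T (k + 1) + (m - k * σ) * T k) := by
  have hshift : ∑ k ∈ Finset.range (m + 1), (m - (k + 1) * σ) * genFactCoeff m (k + 1) σ *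
        T (k + 1) = ∑ k ∈ Finset.range (m + 1), (m - k * σ) * genFactCoeff m k σ * T k := by
    have h0 : (m : ℝ) * genFactCoeff m 0 σ = 0 := by
      cases m <;> simp [genFactCoeff_succ_zero]
    have h := Finset.sum_range_succ' (fun k : ℕ => (m - k * σ) * genFactCoeff m k σ * T k) (m + 1)
    rw [Finset.sum_range_succ, genFactCoeff_eq_zero_of_lt m.lt_succ_self] at h
    simpa [h0] using h.symm
  rw [Finset.sum_range_succ', genFactCoeff_succ_zero, zero_mul, add_zero]
  calc ∑ k ∈ Finset.range (m + 1), genFactCoeff (m + 1) (k + 1) σ * T (k + 1)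
      = ∑ k ∈ Finset.range (m + 1), (m - (k + 1) * σ) * genFactCoeff m (k + 1) σ * T (k + 1) +
          ∑ k ∈ Finset.range (m + 1), σ * genFactCoeff m k σ * T (k + 1) := by
        rw [← Finset.sum_add_distrib]
        exact Finset.sum_congr rfl fun k _ => by rw [genFactCoeff_succ_succ]; ring
    _ = _ := by
        rw [hshift, ← Finset.sum_add_distrib]
        exact Finset.sum_congr rfl fun k _ => by ring

lemma hasDerivAt_exp_neg_rpow_mul_sum_genFactCoeff (σ : ℝ) (m : ℕ) {x : ℝ} (hx : 0 < x) :
    HasDerivAt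
      (fun x : ℝ => exp (-x ^ σ) *
        ∑ k ∈ Finset.range (m + 1), genFactCoeff m k σ * x ^ (k * σ - m))
      (-(exp (-x ^ σ) *
        ∑ k ∈ Finset.range (m + 2),
          genFactCoeff (m + 1) k σ * x ^ (k * σ - ((m + 1 : ℕ) : ℝ)))) x := by
  have hexp := (hasDerivAt_rpow_const (p := σ) (.inl hx.ne')).neg.exp
  have hsum := HasDerivAt.fun_sum fun k (_ : k ∈ Finset.range (m + 1)) =>
    (hasDerivAt_rpow_const (p := k * σ - m) (.inl hx.ne')).const_mul (genFactCoeff m k σ)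
  refine (hexp.mul hsum).congr_deriv ?_
  rw [sum_genFactCoeff_succ_mul, Pi.neg_apply, mul_assoc, ← mul_add, ← mul_neg (exp _),
    Finset.mul_sum, ← Finset.sum_add_distrib, ← Finset.sum_neg_distrib]
  congr 1
  refine Finset.sum_congr rfl fun k _ => ?_
  have hmul : x ^ (σ - 1) * x ^ (k * σ - m) =
      x ^ (((k + 1 : ℕ) : ℝ) * σ - ((m + 1 : ℕ) : ℝ)) := by
    rw [← rpow_add hx]
    congr 1
    push_cast
    ring
  have hpow : x ^ (k * σ - m - 1) = x ^ (k * σ - ((m + 1 : ℕ) : ℝ)) := by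
    congr 1
    push_cast
    ring
  rw [hpow, ← hmul]
  ring

theorem iteratedDeriv_exp_neg_rpow (σ : ℝ) (m : ℕ) {x : ℝ} (hx : 0 < x) :
    iteratedDeriv m (fun x : ℝ => exp (-x ^ σ)) x =
      (-1) ^ m * (exp (-x ^ σ) *
        ∑ k ∈ Finset.range (m + 1), genFactCoeff m k σ * x ^ (k * σ - m)) := by
  induction m generalizing x with
  | zero => simp [genFactCoeff, risingFactorial]
  | succ m ih =>
    have heq : iteratedDeriv m (fun x : ℝ => exp (-x ^ σ)) =ᶠ[𝓝 x] fun x => (-1) ^ m *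
        (exp (-x ^ σ) * ∑ k ∈ Finset.range (m + 1), genFactCoeff m k σ * x ^ (k * σ - m)) := by
      filter_upwards [Ioi_mem_nhds hx] with y hy using ih hy
    rw [iteratedDeriv_succ, heq.deriv_eq,
      ((hasDerivAt_exp_neg_rpow_mul_sum_genFactCoeff σ m hx).const_mul _).deriv]
    ring

end GenFactCoeff

section HalfStable

lemma integrableOn_Ioi_and_integral_Ioi_of_hasDerivAt_of_nonneg_of_tendsto {g g' : ℝ → ℝ}
    {a l r : ℝ} (hderiv : ∀ x ∈ Ioi a, HasDerivAt g (g' x) x) (hnonneg : ∀ x ∈ Ioi a, 0 ≤ g' x)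
    (hl : Tendsto g (𝓝[>] a) (𝓝 l)) (hr : Tendsto g atTop (𝓝 r)) :
    IntegrableOn g' (Ioi a) ∧ ∫ x in Ioi a, g' x = r - l := by
  have hcont : ContinuousWithinAt (Function.update g a l) (Ici a) a := by
    rw [continuousWithinAt_update_same]
    simpa using hl
  have hderiv' : ∀ x ∈ Ioi a, HasDerivAt (Function.update g a l) (g' x) x := fun x hx => by
    refine (hderiv x hx).congr_of_eventuallyEq ?_
    filter_upwards [Ioi_mem_nhds hx] with y hy using Function.update_of_ne (ne_of_gt hy) _ _
  have hr' : Tendsto (Function.update g a l) atTop (𝓝 r) := by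
    refine hr.congr' ?_
    filter_upwards [eventually_gt_atTop a] with y hy using (Function.update_of_ne hy.ne' _ _).symm
  refine ⟨integrableOn_Ioi_deriv_of_nonneg hcont hderiv' hnonneg hr', ?_⟩
  rw [integral_Ioi_of_hasDerivAt_of_nonneg hcont hderiv' hnonneg hr', Function.update_self]

lemma hasDerivAt_cdf_gaussianReal (μ : ℝ) {v : ℝ≥0} (hv : v ≠ 0) (x : ℝ) :
    HasDerivAt (cdf (gaussianReal μ v)) (gaussianPDFReal μ v x) x := by
  have hcdf (y : ℝ) : cdf (gaussianReal μ v) y = ∫ z in Iic y, gaussianPDFReal μ v z := by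
    rw [cdf_eq_real, measureReal_def, gaussianReal_apply_eq_integral μ hv, ENNReal.toReal_ofReal]
    exact integral_nonneg fun z => gaussianPDFReal_nonneg μ v z
  have hprimitive : ⇑(cdf (gaussianReal μ v)) = fun y =>
      cdf (gaussianReal μ v) 0 + ∫ z in (0 : ℝ)..y, gaussianPDFReal μ v z := by
    funext y
    have hint := integrable_gaussianPDFReal μ v
    rw [← intervalIntegral.integral_Iic_sub_Iic hint.integrableOn hint.integrableOn, hcdf, hcdf]
    ring
  have hcont : Continuous (gaussianPDFReal μ v) := by
    unfold gaussianPDFReal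
    fun_prop
  rw [hprimitive]
  exact (hcont.integral_hasStrictDerivAt 0 x).hasDerivAt.const_add _

/-- A primitive of `x ↦ f_{1/2}(x) e^{-q² x}` on `(0, ∞)`: up to normalisation, the distribution
function of the inverse Gaussian law, written with the distribution function of the centred
Gaussian of variance `1/2`. -/
noncomputable def fHalfMulExpPrimitive (q x : ℝ) : ℝ :=
  -(exp q * cdf (gaussianReal 0 (1 / 2)) ((2 * √x)⁻¹ + q * √x) +
    exp (-q) * cdf (gaussianReal 0 (1 / 2)) ((2 * √x)⁻¹ - q * √x))

lemma gaussianPDFReal_zero_half (x : ℝ) :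
    gaussianPDFReal 0 (1 / 2) x = (√π)⁻¹ * exp (-x ^ 2) := by
  simp only [gaussianPDFReal, sub_zero]
  have h : 2 * π * ((1 / 2 : ℝ≥0) : ℝ) = π := by push_cast; ring
  rw [h]
  norm_num

lemma exp_mul_exp_neg_sq_add (q : ℝ) {x : ℝ} (hx : 0 < x) :
    exp q * exp (-((2 * √x)⁻¹ + q * √x) ^ 2) = exp (-1 / (4 * x)) * exp (-(q ^ 2 * x)) := by
  rw [← exp_add, ← exp_add]
  congr 1
  nth_rw 3 4 [← sq_sqrt hx.le]
  field_simp
  ring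

lemma hasDerivAt_inv_two_mul_sqrt {x : ℝ} (hx : 0 < x) :
    HasDerivAt (fun x : ℝ => (2 * √x)⁻¹) (-(4 * √x ^ 3)⁻¹) x := by
  refine (((hasDerivAt_sqrt hx.ne').const_mul 2).inv (by positivity)).congr_deriv ?_
  field_simp
  ring

lemma fHalf_eq_inv_sqrt_pow {x : ℝ} (hx : 0 ≤ x) :
    fHalf x = (2 * √π * √x ^ 3)⁻¹ * exp (-1 / (4 * x)) := by
  have hrpow : x ^ (-(3 / 2) : ℝ) = (√x ^ 3)⁻¹ := by
    rw [rpow_neg hx, sqrt_eq_rpow, ← rpow_mul_natCast hx]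
    norm_num
  rw [fHalf, hrpow, one_div, ← mul_inv]

lemma hasDerivAt_fHalfMulExpPrimitive (q : ℝ) {x : ℝ} (hx : 0 < x) :
    HasDerivAt (fHalfMulExpPrimitive q) (fHalf x * exp (-(q ^ 2 * x))) x := by
  have hinv := hasDerivAt_inv_two_mul_sqrt hx
  have hmul := (hasDerivAt_sqrt hx.ne').const_mul q
  have hcdf (y : ℝ) := hasDerivAt_cdf_gaussianReal 0 (v := 1 / 2) (by norm_num) y
  have hplus := ((hcdf _).comp x (hinv.add hmul)).const_mul (exp q)
  have hminus := ((hcdf _).comp x (hinv.sub hmul)).const_mul (exp (-q))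
  refine (hplus.add hminus).neg.congr_deriv ?_
  have hexp := exp_mul_exp_neg_sq_add q hx
  have hexp_neg := exp_mul_exp_neg_sq_add (-q) hx
  rw [neg_mul, ← sub_eq_add_neg, neg_sq] at hexp_neg
  simp only [gaussianPDFReal_zero_half, Pi.add_apply, Pi.sub_apply, fHalf_eq_inv_sqrt_pow hx.le]
  linear_combination (√π)⁻¹ * ((4 * √x ^ 3)⁻¹ - q * (1 / (2 * √x))) * hexp +
    (√π)⁻¹ * ((4 * √x ^ 3)⁻¹ + q * (1 / (2 * √x))) * hexp_neg

lemma tendsto_fHalfMulExpPrimitive_nhdsGT_zero (q : ℝ) :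
    Tendsto (fHalfMulExpPrimitive q) (𝓝[>] 0) (𝓝 (-(exp q + exp (-q)))) := by
  have hsqrt : Tendsto (fun x : ℝ => q * √x) (𝓝[>] 0) (𝓝 0) :=
    ((by fun_prop : Continuous fun x : ℝ => q * √x).tendsto' 0 0 (by simp)).mono_left
      nhdsWithin_le_nhds
  have hinv : Tendsto (fun x : ℝ => (2 * √x)⁻¹) (𝓝[>] 0) atTop := by
    refine Tendsto.inv_tendsto_nhdsGT_zero (tendsto_nhdsWithin_iff.2 ⟨?_, ?_⟩)
    · exact ((by fun_prop : Continuous fun x : ℝ => 2 * √x).tendsto' 0 0 (by simp)).mono_left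
        nhdsWithin_le_nhds
    · filter_upwards [self_mem_nhdsWithin] with x hx
      exact mul_pos two_pos (sqrt_pos.2 hx)
  have hcdf := tendsto_cdf_atTop (gaussianReal 0 (1 / 2))
  have hplus := (hcdf.comp (hinv.atTop_add hsqrt)).const_mul (exp q)
  have hminus := (hcdf.comp (hinv.atTop_add hsqrt.neg)).const_mul (exp (-q))
  unfold fHalfMulExpPrimitive
  simpa [Function.comp_def, sub_eq_add_neg] using (hplus.add hminus).neg

lemma tendsto_fHalfMulExpPrimitive_atTop {q : ℝ} (hq : 0 < q) :
    Tendsto (fHalfMulExpPrimitive q) atTop (𝓝 (-exp q)) := by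
  have hsqrt : Tendsto (fun x : ℝ => q * √x) atTop atTop :=
    tendsto_sqrt_atTop.const_mul_atTop hq
  have hinv : Tendsto (fun x : ℝ => (2 * √x)⁻¹) atTop (𝓝 0) :=
    (tendsto_sqrt_atTop.const_mul_atTop two_pos).inv_tendsto_atTop
  have hplus := ((tendsto_cdf_atTop (gaussianReal 0 (1 / 2))).comp
    (hinv.add_atTop hsqrt)).const_mul (exp q)
  have hminus := ((tendsto_cdf_atBot (gaussianReal 0 (1 / 2))).comp
    (hinv.add_atBot (tendsto_neg_atTop_atBot.comp hsqrt))).const_mul (exp (-q))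
  unfold fHalfMulExpPrimitive
  simpa [Function.comp_def, sub_eq_add_neg] using (hplus.add hminus).neg

lemma fHalf_nonneg {x : ℝ} (hx : 0 ≤ x) : 0 ≤ fHalf x := by
  unfold fHalf
  positivity

lemma measurable_fHalf : Measurable fHalf := by
  unfold fHalf
  fun_prop

theorem integrableOn_and_integral_fHalf_mul_exp_neg {t : ℝ} (ht : 0 < t) :
    IntegrableOn (fun x => fHalf x * exp (-(t * x))) (Ioi 0) ∧
      ∫ x in Ioi 0, fHalf x * exp (-(t * x)) = exp (-√t) := by
  have h := integrableOn_Ioi_and_integral_Ioi_of_hasDerivAt_of_nonneg_of_tendsto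
    (fun x hx => hasDerivAt_fHalfMulExpPrimitive (√t) hx)
    (fun x hx => mul_nonneg (fHalf_nonneg (le_of_lt hx)) (exp_pos _).le)
    (tendsto_fHalfMulExpPrimitive_nhdsGT_zero (√t))
    (tendsto_fHalfMulExpPrimitive_atTop (sqrt_pos.2 ht))
  rw [sq_sqrt ht.le] at h
  exact ⟨h.1, h.2.trans (by ring)⟩

/-- The positive `1/2`-stable distribution, with density `f_{1/2}` on `(0, ∞)`. -/
noncomputable def halfStable : Measure ℝ :=
  (volume.restrict (Ioi 0)).withDensity fun x => ENNReal.ofReal (fHalf x)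

instance : SigmaFinite halfStable :=
  SigmaFinite.withDensity_of_ne_top' fun _ => ENNReal.ofReal_ne_top

lemma lintegral_halfStable {g : ℝ → ℝ≥0∞} (hg : Measurable g) :
    ∫⁻ x, g x ∂halfStable = ∫⁻ x in Ioi 0, ENNReal.ofReal (fHalf x) * g x :=
  lintegral_withDensity_eq_lintegral_mul _ measurable_fHalf.ennreal_ofReal hg

lemma ae_halfStable_pos : ∀ᵐ x ∂halfStable, 0 < x :=
  (withDensity_absolutelyContinuous _ _).ae_le (ae_restrict_mem measurableSet_Ioi)

lemma integrable_exp_neg_halfStable {t : ℝ} (ht : 0 < t) :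
    Integrable (fun x => exp (-(t * x))) halfStable := by
  rw [halfStable, integrable_withDensity_iff_integrable_smul'
    measurable_fHalf.ennreal_ofReal (by simp)]
  refine (integrableOn_and_integral_fHalf_mul_exp_neg ht).1.congr_fun (fun x hx => ?_)
    measurableSet_Ioi
  simp only [ENNReal.toReal_ofReal (fHalf_nonneg (le_of_lt hx)), smul_eq_mul]

lemma mgf_id_halfStable {t : ℝ} (ht : t < 0) :
    mgf id halfStable t = exp (-(-t) ^ (1 / 2 : ℝ)) := by
  rw [mgf, halfStable, integral_withDensity_eq_integral_toReal_smul
    measurable_fHalf.ennreal_ofReal (by simp), ← sqrt_eq_rpow,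
    ← (integrableOn_and_integral_fHalf_mul_exp_neg (neg_pos.2 ht)).2]
  refine setIntegral_congr_fun measurableSet_Ioi fun x hx => ?_
  simp [ENNReal.toReal_ofReal (fHalf_nonneg (le_of_lt hx))]

lemma mem_interior_integrableExpSet_id_halfStable {t : ℝ} (ht : t < 0) :
    t ∈ interior (integrableExpSet id halfStable) := by
  refine interior_maximal (fun s hs => ?_) isOpen_Iio ht
  simpa [integrableExpSet] using integrable_exp_neg_halfStable (neg_pos.2 hs)

lemma integrable_pow_mul_exp_neg_halfStable (m : ℕ) {t : ℝ} (ht : 0 < t) :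
    Integrable (fun x => x ^ m * exp (-(t * x))) halfStable := by
  simpa using integrable_pow_mul_exp_of_mem_interior_integrableExpSet
    (mem_interior_integrableExpSet_id_halfStable (neg_lt_zero.2 ht)) m

theorem integral_pow_mul_exp_neg_halfStable (m : ℕ) {t : ℝ} (ht : 0 < t) :
    ∫ x, x ^ m * exp (-(t * x)) ∂halfStable =
      exp (-√t) * ∑ k ∈ Finset.range (m + 1),
        genFactCoeff m k (1 / 2) * t ^ (k * (1 / 2 : ℝ) - m) := by
  have hmgf : mgf id halfStable =ᶠ[𝓝 (-t)] fun s => exp (-(-s) ^ (1 / 2 : ℝ)) := by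
    filter_upwards [Iio_mem_nhds (neg_lt_zero.2 ht)] with s hs using mgf_id_halfStable hs
  calc ∫ x, x ^ m * exp (-(t * x)) ∂halfStable
      = iteratedDeriv m (mgf id halfStable) (-t) := by
        rw [iteratedDeriv_mgf (mem_interior_integrableExpSet_id_halfStable (neg_lt_zero.2 ht))]
        simp
    _ = (-1) ^ m * iteratedDeriv m (fun s : ℝ => exp (-s ^ (1 / 2 : ℝ))) t := by
        rw [hmgf.iteratedDeriv_eq,
          iteratedDeriv_comp_neg m fun s : ℝ => exp (-s ^ (1 / 2 : ℝ)), neg_neg, smul_eq_mul]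
    _ = _ := by
        rw [iteratedDeriv_exp_neg_rpow _ _ ht, ← mul_assoc, ← mul_pow, sqrt_eq_rpow]
        simp

end HalfStable

section LebesgueIntegral

lemma integral_integral_eq_toReal_lintegral_lintegral {α β : Type*} [MeasurableSpace α]
    [MeasurableSpace β] {μ : Measure α} {ν : Measure β} [SFinite ν] {f : α → β → ℝ}
    (hf : Measurable (Function.uncurry f)) (hnonneg : ∀ᵐ x ∂μ, ∀ᵐ y ∂ν, 0 ≤ f x y)
    (hfin : ∫⁻ x, ∫⁻ y, ENNReal.ofReal (f x y) ∂ν ∂μ ≠ ⊤) :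
    ∫ x, ∫ y, f x y ∂ν ∂μ = (∫⁻ x, ∫⁻ y, ENNReal.ofReal (f x y) ∂ν ∂μ).toReal := by
  have hmeas : Measurable fun x => ∫⁻ y, ENNReal.ofReal (f x y) ∂ν :=
    hf.ennreal_ofReal.lintegral_prod_right'
  rw [← integral_toReal hmeas.aemeasurable (ae_lt_top hmeas hfin)]
  refine integral_congr_ae ?_
  filter_upwards [hnonneg] with x hx
  exact integral_eq_lintegral_of_nonneg_ae hx hf.of_uncurry_left.aestronglyMeasurable

lemma lintegral_Ioi_zero_eq_lintegral_comp_mul_left {c : ℝ} (hc : 0 < c) (g : ℝ → ℝ≥0∞) :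
    ∫⁻ x in Ioi 0, g x = ∫⁻ x in Ioi 0, ENNReal.ofReal c * g (c * x) := by
  have h := lintegral_image_eq_lintegral_deriv_mul_of_monotoneOn measurableSet_Ioi
    (fun x (_ : x ∈ Ioi 0) => (hasDerivAt_const_mul c).hasDerivWithinAt)
    ((monotone_id.const_mul hc.le).monotoneOn _) g
  rwa [image_mul_left_Ioi hc, mul_zero] at h

lemma image_inv_one_add_Ioi_zero : (fun r : ℝ => (1 + r)⁻¹) '' Ioi 0 = Ioo 0 1 := by
  have h : (fun r : ℝ => (1 + r)⁻¹) = Inv.inv ∘ fun r => 1 + r := rfl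
  rw [h, image_comp, image_const_add_Ioi, add_zero, image_inv_eq_inv, inv_Ioi₀ one_pos, inv_one]

lemma lintegral_Ioo_zero_one_eq_lintegral_comp_inv_one_add (g : ℝ → ℝ≥0∞) :
    ∫⁻ p in Ioo 0 1, g p =
      ∫⁻ r in Ioi 0, ENNReal.ofReal (((1 + r) ^ 2)⁻¹) * g (1 + r)⁻¹ := by
  have hderiv (r : ℝ) (hr : r ∈ Ioi 0) :
      HasDerivWithinAt (fun r : ℝ => (1 + r)⁻¹) (-1 / (1 + r) ^ 2) (Ioi 0) r :=
    (((hasDerivAt_id r).const_add 1).inv (add_pos one_pos hr).ne').hasDerivWithinAt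
  have hanti : AntitoneOn (fun r : ℝ => (1 + r)⁻¹) (Ioi 0) := fun r hr s _ hrs =>
    inv_anti₀ (add_pos one_pos hr) (add_le_add_right hrs 1)
  rw [← image_inv_one_add_Ioi_zero,
    lintegral_image_eq_lintegral_deriv_mul_of_antitoneOn measurableSet_Ioi hderiv hanti]
  simp only [neg_div, neg_neg, one_div]

-- The new coordinates are `s = h p` and `r = 1 / p - 1`.
lemma lintegral_Ioi_lintegral_Ioo_eq {G : ℝ → ℝ → ℝ≥0∞} (hG : Measurable (Function.uncurry G)) :
    ∫⁻ h in Ioi 0, ∫⁻ p in Ioo 0 1, G h p =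
      ∫⁻ s in Ioi 0, ∫⁻ r in Ioi 0, ENNReal.ofReal (1 + r)⁻¹ * G ((1 + r) * s) (1 + r)⁻¹ := by
  have hmeas : Measurable (Function.uncurry fun r s : ℝ =>
      ENNReal.ofReal (1 + r)⁻¹ * G ((1 + r) * s) (1 + r)⁻¹) := by
    have hcoord : Measurable fun q : ℝ × ℝ => ((1 + q.1) * q.2, (1 + q.1)⁻¹) := by fun_prop
    exact Measurable.mul (by fun_prop) (hG.comp hcoord)
  rw [lintegral_lintegral_swap hG.aemeasurable,
    lintegral_Ioo_zero_one_eq_lintegral_comp_inv_one_add,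
    ← lintegral_lintegral_swap hmeas.aemeasurable]
  refine setLIntegral_congr_fun measurableSet_Ioi fun r hr => ?_
  have hr1 : 0 < 1 + r := add_pos one_pos hr
  simp only [lintegral_Ioi_zero_eq_lintegral_comp_mul_left hr1 (fun h => G h (1 + r)⁻¹)]
  rw [← lintegral_const_mul' _ _ ENNReal.ofReal_ne_top]
  refine lintegral_congr fun s => ?_
  rw [← mul_assoc, ← ENNReal.ofReal_mul (by positivity)]
  congr 2
  field_simp

end LebesgueIntegral

section Kummer

lemma lintegral_rpow_mul_exp_neg_mul_Ioi {a c : ℝ} (ha : 0 < a) (hc : 0 < c) :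
    ∫⁻ x in Ioi 0, ENNReal.ofReal (x ^ (a - 1) * exp (-(c * x))) =
      ENNReal.ofReal (Gamma a * c ^ (-a)) := by
  have h := integral_rpow_mul_exp_neg_mul_Ioi ha hc
  rw [rpow_neg hc.le, ← inv_rpow hc.le, mul_comm, ← one_div, ← h]
  refine (ofReal_integral_eq_lintegral_ofReal (.of_integral_ne_zero ?_) ?_).symm
  · rw [h]
    positivity
  · filter_upwards [ae_restrict_mem measurableSet_Ioi] with x (hx : 0 < x)
    simp only [Pi.zero_apply]
    positivity

/-- The integral `∫_0^∞ y^{a-1} (1+y)^{-b} e^{-ty} dy`, equal to `Γ(a) U(a, a-b+1, t)` with `U`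
the Tricomi confluent hypergeometric function. -/
noncomputable def tricomiIntegral (a b t : ℝ) : ℝ≥0∞ :=
  ∫⁻ y in Ioi 0, ENNReal.ofReal (y ^ (a - 1) * (1 + y) ^ (-b) * exp (-(t * y)))

lemma measurable_tricomiIntegral (a b : ℝ) : Measurable (tricomiIntegral a b) :=
  Measurable.lintegral_prod_right' (f := fun q : ℝ × ℝ =>
    ENNReal.ofReal (q.2 ^ (a - 1) * (1 + q.2) ^ (-b) * exp (-(q.1 * q.2)))) (by fun_prop)

lemma lintegral_lintegral_eq_tricomiIntegral (a : ℝ) {b t : ℝ} (hb : 0 < b) (ht : 0 < t) :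
    ∫⁻ y in Ioi 0, ∫⁻ r in Ioi 0, ENNReal.ofReal
        (y ^ (a - 1) * r ^ (b - 1) * exp (-(t * (y + r + y * r)))) =
      ENNReal.ofReal (Gamma b * t ^ (-b)) * tricomiIntegral a b t := by
  rw [tricomiIntegral, ← lintegral_const_mul' _ _ ENNReal.ofReal_ne_top]
  refine setLIntegral_congr_fun measurableSet_Ioi fun y (hy : 0 < y) => ?_
  have hsplit (r : ℝ) : ENNReal.ofReal
      (y ^ (a - 1) * r ^ (b - 1) * exp (-(t * (y + r + y * r)))) =
      ENNReal.ofReal (y ^ (a - 1) * exp (-(t * y))) *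
        ENNReal.ofReal (r ^ (b - 1) * exp (-(t * (1 + y) * r))) := by
    rw [← ENNReal.ofReal_mul (by positivity), show -(t * (y + r + y * r)) =
      -(t * y) + -(t * (1 + y) * r) by ring, exp_add]
    ring_nf
  simp only [hsplit]
  rw [lintegral_const_mul' _ _ ENNReal.ofReal_ne_top,
    lintegral_rpow_mul_exp_neg_mul_Ioi hb (by positivity), mul_rpow ht.le (by positivity),
    ← ENNReal.ofReal_mul (by positivity), ← ENNReal.ofReal_mul (by positivity)]
  ring_nf

-- Kummer's transformation `U(a, c, t) = t^{1-c} U(a-c+1, 2-c, t)` with `c = a - b + 1`.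
theorem tricomiIntegral_comm {a b t : ℝ} (ha : 0 < a) (hb : 0 < b) (ht : 0 < t) :
    tricomiIntegral b a t =
      ENNReal.ofReal (Gamma b / Gamma a * t ^ (a - b)) * tricomiIntegral a b t := by
  have hmeas : Measurable (Function.uncurry fun y r : ℝ => ENNReal.ofReal
      (y ^ (a - 1) * r ^ (b - 1) * exp (-(t * (y + r + y * r))))) := by
    fun_prop
  have hsymm : ENNReal.ofReal (Gamma b * t ^ (-b)) * tricomiIntegral a b t =
      ENNReal.ofReal (Gamma a * t ^ (-a)) * tricomiIntegral b a t := by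
    rw [← lintegral_lintegral_eq_tricomiIntegral a hb ht,
      ← lintegral_lintegral_eq_tricomiIntegral b ha ht,
      lintegral_lintegral_swap hmeas.aemeasurable]
    refine lintegral_congr fun r => lintegral_congr fun y => ?_
    ring_nf
  calc tricomiIntegral b a t
      = ENNReal.ofReal (Gamma a * t ^ (-a))⁻¹ *
          (ENNReal.ofReal (Gamma a * t ^ (-a)) * tricomiIntegral b a t) := by
        rw [← mul_assoc, ← ENNReal.ofReal_mul (by positivity), inv_mul_cancel₀ (by positivity),
          ENNReal.ofReal_one, one_mul]
    _ = _ := by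
        rw [← hsymm, ← mul_assoc, ← ENNReal.ofReal_mul (by positivity), rpow_neg ht.le a,
          sub_eq_add_neg, rpow_add ht]
        field_simp

end Kummer

section Weights

variable {α : ℝ}

/-- The integral `∫_0^∞ ∫_0^∞ x^m y^m (1+y)^{-1/2} e^{-α²x(1+y)} f_{1/2}(x) dy dx`, to which both
expressions for the probability of a new symbol reduce up to a common constant. -/
noncomputable def halfStableTricomiIntegral (α : ℝ) (m : ℕ) : ℝ≥0∞ :=
  ∫⁻ x, ENNReal.ofReal (x ^ m * exp (-(α ^ 2 * x))) *
    tricomiIntegral (m + 1) (1 / 2) (α ^ 2 * x) ∂halfStable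

/-- The integrand of `Vhalf (m + 1) (k + 1) α` after the substitution `y = 2x`, up to a factor
independent of `k` and `y` and the factor `2 ^ k`. -/
noncomputable def vhalfIntegrand (α : ℝ) (m k : ℕ) (y : ℝ) : ℝ :=
  y ^ m * (1 + y) ^ (-(1 / 2) : ℝ) *
    (exp (-√(α ^ 2 * (1 + y))) * (α ^ 2 * (1 + y)) ^ (k * (1 / 2 : ℝ) - m))

lemma vhalfIntegrand_eq (hα : 0 < α) (m k : ℕ) {y : ℝ} (hy : 0 < 1 + y) :
    α ^ (2 * m + 1) * vhalfIntegrand α m k y =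
      α ^ (k + 1) *
        (y ^ m * (1 + y) ^ ((k : ℝ) * (1 / 2) - m - 1 / 2) * exp (-(α * √(1 + y)))) := by
  have hα_pow : α ^ (2 * m + 1) * (α ^ 2) ^ (k * (1 / 2 : ℝ) - m) = α ^ (k + 1) := by
    rw [← rpow_natCast_mul hα.le, ← rpow_natCast, ← rpow_natCast, ← rpow_add hα]
    congr 1
    push_cast
    ring
  rw [vhalfIntegrand, sqrt_mul (by positivity), sqrt_sq hα.le, mul_rpow (by positivity) hy.le,
    ← hα_pow, sub_eq_add_neg _ (1 / 2 : ℝ), rpow_add hy]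
  ring

lemma integrableOn_one_add_rpow_mul_exp_neg_mul_sqrt {c s : ℝ} (hc : 0 < c) (hs : -1 < s) :
    IntegrableOn (fun y => (1 + y) ^ s * exp (-(c * √(1 + y)))) (Ioi 0) := by
  have h := (integrableOn_rpow_mul_exp_neg_mul_rpow hs (by norm_num : (0 : ℝ) < 1 / 2) hc).mono_set
    (Ioi_subset_Ioi zero_le_one)
  have hshift := ((measurePreserving_add_left volume (1 : ℝ)).integrableOn_comp_preimage
    (measurableEmbedding_addLeft 1)).2 h
  simpa [Function.comp_def, sqrt_eq_rpow] using hshift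

lemma integrableOn_vhalfIntegrand (hα : 0 < α) (m k : ℕ) :
    IntegrableOn (vhalfIntegrand α m k) (Ioi 0) := by
  have hexponent : (-1 : ℝ) < (k : ℝ) * (1 / 2) - 1 / 2 := by
    linarith [k.cast_nonneg (α := ℝ)]
  have hbound := (integrableOn_one_add_rpow_mul_exp_neg_mul_sqrt hα hexponent).const_mul
    (α ^ (k + 1))
  suffices h : IntegrableOn (fun y => α ^ (2 * m + 1) * vhalfIntegrand α m k y) (Ioi 0) from
    (integrable_const_mul_iff (by positivity : α ^ (2 * m + 1) ≠ 0).isUnit _).1 h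
  have hmeas : Measurable fun y => α ^ (2 * m + 1) * vhalfIntegrand α m k y := by
    unfold vhalfIntegrand
    fun_prop
  refine hbound.mono' hmeas.aestronglyMeasurable ?_
  filter_upwards [ae_restrict_mem measurableSet_Ioi] with y (hy : 0 < y)
  have hy1 : 0 < 1 + y := by positivity
  have hpow : y ^ m ≤ (1 + y) ^ (m : ℝ) := by
    rw [rpow_natCast]
    exact pow_le_pow_left₀ hy.le (by linarith) m
  rw [vhalfIntegrand_eq hα m k hy1, norm_of_nonneg (by positivity)]
  calc α ^ (k + 1) * (y ^ m * (1 + y) ^ ((k : ℝ) * (1 / 2) - m - 1 / 2) * exp (-(α * √(1 + y))))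
      ≤ α ^ (k + 1) * ((1 + y) ^ (m : ℝ) * (1 + y) ^ ((k : ℝ) * (1 / 2) - m - 1 / 2) *
          exp (-(α * √(1 + y)))) := by gcongr
    _ = _ := by
      rw [← rpow_add hy1]
      ring_nf

lemma inv_sqrt_two_pow_mul_two_pow (m k : ℕ) :
    (√2 ^ (k + 1))⁻¹ * 2 ^ k * (2 ^ ((k : ℝ) * (1 / 2) - m - 1 / 2))⁻¹ = (2 : ℝ) ^ m := by
  rw [sqrt_eq_rpow, ← rpow_mul_natCast zero_le_two, ← rpow_neg zero_le_two,
    ← rpow_neg zero_le_two, ← rpow_natCast, ← rpow_natCast, ← rpow_add two_pos, ← rpow_add two_pos]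
  congr 1
  push_cast
  ring

lemma exp_mul_vhalfIntegrand_two_mul (hα : 0 < α) (m k : ℕ) {x : ℝ} (hx : 0 < 1 + 2 * x) :
    exp α * (α ^ (2 * m + 1) * vhalfIntegrand α m k (2 * x)) =
      (α / √2) ^ (k + 1) * 2 ^ k * (x ^ (m + 1 - 1) *
        (1 / 2 + x) ^ (-(((m + 1 : ℕ) : ℝ) - ((k + 1 : ℕ) : ℝ) / 2)) *
          exp (-α * (√(1 + 2 * x) - 1))) := by
  have hexponent : -(((m + 1 : ℕ) : ℝ) - ((k + 1 : ℕ) : ℝ) / 2) =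
      (k : ℝ) * (1 / 2) - m - 1 / 2 := by
    push_cast
    ring
  have hexp : exp (-α * (√(1 + 2 * x) - 1)) = exp α * exp (-(α * √(1 + 2 * x))) := by
    rw [← exp_add]
    ring_nf
  rw [vhalfIntegrand_eq hα m k hx, hexponent, hexp,
    show (1 / 2 : ℝ) + x = (1 + 2 * x) / 2 by ring, div_rpow hx.le zero_le_two, div_pow,
    mul_pow, ← inv_sqrt_two_pow_mul_two_pow m k, Nat.add_sub_cancel]
  ring

lemma vhalf_succ_succ_mul_two_pow (hα : 0 < α) (m k : ℕ) :
    Vhalf (m + 1) (k + 1) α * 2 ^ k =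
      α ^ (2 * m + 1) * exp α / (2 * m.factorial) * ∫ y in Ioi 0, vhalfIntegrand α m k y := by
  have hsubst := integral_comp_mul_left_Ioi (vhalfIntegrand α m k) 0 two_pos
  rw [mul_zero, smul_eq_mul] at hsubst
  have hintegral := setIntegral_congr_fun (μ := volume) measurableSet_Ioi fun x (hx : 0 < x) =>
    exp_mul_vhalfIntegrand_two_mul hα m k (x := x) (by positivity)
  rw [integral_const_mul, integral_const_mul, integral_const_mul, hsubst] at hintegral
  rw [Vhalf, Nat.cast_add_one m, Gamma_nat_eq_factorial, ← Nat.cast_add_one]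
  linear_combination -(m.factorial : ℝ)⁻¹ * hintegral

lemma sum_genFactCoeff_mul_vhalfIntegrand (hα : 0 < α) (m : ℕ) {y : ℝ} (hy : 0 < 1 + y) :
    ∑ k ∈ Finset.range (m + 1), genFactCoeff m k (1 / 2) * vhalfIntegrand α m k y =
      y ^ m * (1 + y) ^ (-(1 / 2) : ℝ) *
        ∫ x, x ^ m * exp (-(α ^ 2 * (1 + y) * x)) ∂halfStable := by
  rw [integral_pow_mul_exp_neg_halfStable m (by positivity), Finset.mul_sum, Finset.mul_sum]
  exact Finset.sum_congr rfl fun k _ => by rw [vhalfIntegrand]; ring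

lemma lintegral_sum_genFactCoeff_mul_vhalfIntegrand (hα : 0 < α) (m : ℕ) :
    ∫⁻ y in Ioi 0, ENNReal.ofReal
        (∑ k ∈ Finset.range (m + 1), genFactCoeff m k (1 / 2) * vhalfIntegrand α m k y) =
      halfStableTricomiIntegral α m := by
  have hmeas : Measurable (Function.uncurry fun y x : ℝ =>
      ENNReal.ofReal (y ^ m * (1 + y) ^ (-(1 / 2) : ℝ)) *
        ENNReal.ofReal (x ^ m * exp (-(α ^ 2 * (1 + y) * x)))) := by
    fun_prop
  calc _ = ∫⁻ y in Ioi 0, ∫⁻ x, ENNReal.ofReal (y ^ m * (1 + y) ^ (-(1 / 2) : ℝ)) *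
        ENNReal.ofReal (x ^ m * exp (-(α ^ 2 * (1 + y) * x))) ∂halfStable := by
        refine setLIntegral_congr_fun measurableSet_Ioi fun y (hy : 0 < y) => ?_
        rw [sum_genFactCoeff_mul_vhalfIntegrand hα m (by positivity),
          ENNReal.ofReal_mul (by positivity), lintegral_const_mul' _ _ ENNReal.ofReal_ne_top,
          ofReal_integral_eq_lintegral_ofReal
            (integrable_pow_mul_exp_neg_halfStable m (by positivity))]
        filter_upwards [ae_halfStable_pos] with x hx
        simp only [Pi.zero_apply]
        positivity
    _ = ∫⁻ x, (∫⁻ y in Ioi 0, ENNReal.ofReal (y ^ m * (1 + y) ^ (-(1 / 2) : ℝ)) *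
        ENNReal.ofReal (x ^ m * exp (-(α ^ 2 * (1 + y) * x)))) ∂halfStable :=
        lintegral_lintegral_swap hmeas.aemeasurable
    _ = _ := by
        rw [halfStableTricomiIntegral]
        refine lintegral_congr_ae ?_
        filter_upwards [ae_halfStable_pos] with x hx
        rw [tricomiIntegral, ← lintegral_const_mul' _ _ ENNReal.ofReal_ne_top]
        refine setLIntegral_congr_fun measurableSet_Ioi fun y (hy : 0 < y) => ?_
        rw [← ENNReal.ofReal_mul (by positivity), ← ENNReal.ofReal_mul (by positivity),
          add_sub_cancel_right, rpow_natCast, show -(α ^ 2 * (1 + y) * x) =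
            -(α ^ 2 * x) + -(α ^ 2 * x * y) by ring, exp_add]
        ring_nf

lemma integrableOn_sum_genFactCoeff_mul_vhalfIntegrand (hα : 0 < α) (m : ℕ) :
    IntegrableOn (fun y =>
      ∑ k ∈ Finset.range (m + 1), genFactCoeff m k (1 / 2) * vhalfIntegrand α m k y) (Ioi 0) :=
  integrable_finsetSum _ fun k _ => (integrableOn_vhalfIntegrand hα m k).const_mul _

lemma halfStableTricomiIntegral_ne_top (hα : 0 < α) (m : ℕ) :
    halfStableTricomiIntegral α m ≠ ⊤ := by
  rw [← lintegral_sum_genFactCoeff_mul_vhalfIntegrand hα]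
  exact (integrableOn_sum_genFactCoeff_mul_vhalfIntegrand hα m).lintegral_lt_top.ne

lemma integral_sum_genFactCoeff_mul_vhalfIntegrand (hα : 0 < α) (m : ℕ) :
    ∫ y in Ioi 0, ∑ k ∈ Finset.range (m + 1), genFactCoeff m k (1 / 2) * vhalfIntegrand α m k y =
      (halfStableTricomiIntegral α m).toReal := by
  rw [← lintegral_sum_genFactCoeff_mul_vhalfIntegrand hα]
  refine integral_eq_lintegral_of_nonneg_ae ?_
    (integrableOn_sum_genFactCoeff_mul_vhalfIntegrand hα m).aestronglyMeasurable
  filter_upwards [ae_restrict_mem measurableSet_Ioi] with y (hy : 0 < y)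
  have hmoment : 0 ≤ ∫ x, x ^ m * exp (-(α ^ 2 * (1 + y) * x)) ∂halfStable := by
    refine integral_nonneg_of_ae ?_
    filter_upwards [ae_halfStable_pos] with x hx
    simp only [Pi.zero_apply]
    positivity
  rw [sum_genFactCoeff_mul_vhalfIntegrand hα m (by positivity)]
  simp only [Pi.zero_apply]
  positivity

theorem sum_vhalf_mul_genFactCoeff (hα : 0 < α) {m : ℕ} (hm : 1 ≤ m) :
    ∑ k ∈ Finset.Icc 1 m, Vhalf (m + 1) (k + 1) α * 2 ^ k * genFactCoeff m k (1 / 2) =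
      α ^ (2 * m + 1) * exp α / (2 * m.factorial) * (halfStableTricomiIntegral α m).toReal := by
  obtain ⟨n, rfl⟩ := Nat.exists_eq_add_of_le' hm
  rw [← integral_sum_genFactCoeff_mul_vhalfIntegrand hα, integral_finsetSum _ fun k _ =>
    (integrableOn_vhalfIntegrand hα (n + 1) k).const_mul _, Finset.mul_sum,
    Nat.range_succ_eq_Icc_zero, ← Finset.insert_Icc_add_one_left_eq_Icc (Nat.zero_le _),
    Finset.sum_insert (by simp)]
  simp only [genFactCoeff_succ_zero, zero_mul, integral_zero, mul_zero, zero_add]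
  refine Finset.sum_congr rfl fun k _ => ?_
  rw [vhalf_succ_succ_mul_two_pow hα, integral_const_mul]
  ring

end Weights

section NewToken

variable {α : ℝ}

/-- The density, up to the factor `1 / (2√π)`, in the variables `h > 0` and `p ∈ (0, 1)`, whose
integral is the probability of a new symbol. -/
noncomputable def newTokenDensity (α : ℝ) (m : ℕ) (h p : ℝ) : ℝ :=
  h ^ (-(1 / 2) : ℝ) * fHalf (h * p) * exp (-h * α ^ 2 + α) * p ^ m * (1 - p) ^ (-(1 / 2) : ℝ)

lemma measurable_newTokenDensity (α : ℝ) (m : ℕ) :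
    Measurable (Function.uncurry (newTokenDensity α m)) := by
  have hfHalf := measurable_fHalf
  unfold newTokenDensity
  fun_prop

lemma newTokenDensity_nonneg (α : ℝ) (m : ℕ) {h p : ℝ} (hh : 0 ≤ h) (hp : p ∈ Icc 0 1) :
    0 ≤ newTokenDensity α m h p := by
  have hp_nonneg := hp.1
  have hp_le := sub_nonneg.2 hp.2
  have hfHalf := fHalf_nonneg (mul_nonneg hh hp_nonneg)
  unfold newTokenDensity
  positivity

lemma inv_one_add_mul_newTokenDensity (α : ℝ) (m : ℕ) {s r : ℝ} (hs : 0 < s) (hr : 0 < r) :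
    (1 + r)⁻¹ * newTokenDensity α m ((1 + r) * s) (1 + r)⁻¹ =
      exp α * (fHalf s * s ^ (-(1 / 2) : ℝ) * exp (-(α ^ 2 * s))) *
        (r ^ ((1 / 2 : ℝ) - 1) * (1 + r) ^ (-((m : ℝ) + 1)) * exp (-(α ^ 2 * s * r))) := by
  have hr1 : 0 < 1 + r := by positivity
  have hcompl : 1 - (1 + r)⁻¹ = r * (1 + r)⁻¹ := by
    field_simp
    ring
  have hcancel : (1 + r) * s * (1 + r)⁻¹ = s := by field_simp
  have hexp : exp (-((1 + r) * s) * α ^ 2 + α) =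
      exp α * exp (-(α ^ 2 * s)) * exp (-(α ^ 2 * s * r)) := by
    rw [← exp_add, ← exp_add]
    ring_nf
  have hhalf : (1 + r) ^ (-(1 / 2) : ℝ) * (1 + r)⁻¹ ^ (-(1 / 2) : ℝ) = 1 := by
    rw [← mul_rpow hr1.le (by positivity), mul_inv_cancel₀ hr1.ne', one_rpow]
  have hpow : (1 + r) ^ (-((m : ℝ) + 1)) = (1 + r)⁻¹ ^ m * (1 + r)⁻¹ := by
    rw [rpow_neg hr1.le, ← Nat.cast_add_one, rpow_natCast, ← inv_pow, pow_succ]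
  have hneg_half : (1 / 2 : ℝ) - 1 = -(1 / 2) := by norm_num
  rw [newTokenDensity, hcancel, hcompl, mul_rpow hr1.le hs.le, mul_rpow hr.le (by positivity), hexp,
    hpow, hneg_half]
  linear_combination (exp α * (fHalf s * s ^ (-(1 / 2) : ℝ) * exp (-(α ^ 2 * s))) *
    (r ^ (-(1 / 2) : ℝ) * ((1 + r)⁻¹ ^ m * (1 + r)⁻¹) * exp (-(α ^ 2 * s * r)))) * hhalf

lemma sq_mul_rpow_mul_rpow_neg_half {s : ℝ} (hα : 0 < α) (hs : 0 < s) (m : ℕ) :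
    (α ^ 2 * s) ^ ((m : ℝ) + 1 - 1 / 2) * s ^ (-(1 / 2) : ℝ) = α ^ (2 * m + 1) * s ^ m := by
  rw [mul_rpow (by positivity) hs.le, mul_assoc, ← rpow_add hs, ← rpow_natCast_mul hα.le,
    ← rpow_natCast α (2 * m + 1), ← rpow_natCast s m]
  congr 2 <;> push_cast <;> ring

lemma lintegral_inv_one_add_mul_newTokenDensity (α : ℝ) (m : ℕ) {s : ℝ} (hs : 0 < s) :
    ∫⁻ r in Ioi 0, ENNReal.ofReal (1 + r)⁻¹ *
        ENNReal.ofReal (newTokenDensity α m ((1 + r) * s) (1 + r)⁻¹) =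
      ENNReal.ofReal (exp α * (fHalf s * s ^ (-(1 / 2) : ℝ) * exp (-(α ^ 2 * s)))) *
        tricomiIntegral (1 / 2) (m + 1) (α ^ 2 * s) := by
  have hfHalf := fHalf_nonneg hs.le
  rw [tricomiIntegral, ← lintegral_const_mul' _ _ ENNReal.ofReal_ne_top]
  refine setLIntegral_congr_fun measurableSet_Ioi fun r (hr : 0 < r) => ?_
  rw [← ENNReal.ofReal_mul (by positivity), inv_one_add_mul_newTokenDensity α m hs hr,
    ENNReal.ofReal_mul (by positivity)]

theorem lintegral_newTokenDensity (hα : 0 < α) (m : ℕ) :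
    ∫⁻ h in Ioi 0, ∫⁻ p in Ioo 0 1, ENNReal.ofReal (newTokenDensity α m h p) =
      ENNReal.ofReal (√π * α ^ (2 * m + 1) * exp α / m.factorial) *
        halfStableTricomiIntegral α m := by
  have hmeas := measurable_tricomiIntegral (m + 1) (1 / 2)
  rw [lintegral_Ioi_lintegral_Ioo_eq (G := fun h p => ENNReal.ofReal (newTokenDensity α m h p))
      (measurable_newTokenDensity α m).ennreal_ofReal,
    halfStableTricomiIntegral, lintegral_halfStable (by fun_prop),
    ← lintegral_const_mul' _ _ ENNReal.ofReal_ne_top]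
  refine setLIntegral_congr_fun measurableSet_Ioi fun s (hs : 0 < s) => ?_
  have hfHalf := fHalf_nonneg hs.le
  rw [lintegral_inv_one_add_mul_newTokenDensity α m hs,
    tricomiIntegral_comm (a := m + 1) (b := 1 / 2) (by positivity) (by norm_num) (by positivity),
    Gamma_one_half_eq, Gamma_nat_eq_factorial,
    ← mul_assoc (ENNReal.ofReal _), ← ENNReal.ofReal_mul (by positivity),
    ← mul_assoc (ENNReal.ofReal _), ← ENNReal.ofReal_mul (by positivity),
    ← mul_assoc (ENNReal.ofReal _), ← ENNReal.ofReal_mul (by positivity)]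
  congr 2
  linear_combination exp α * fHalf s * exp (-(α ^ 2 * s)) * √π / m.factorial *
    sq_mul_rpow_mul_rpow_neg_half hα hs m

theorem integral_newTokenDensity (hα : 0 < α) (m : ℕ) :
    ∫ h in Ioi 0, ∫ p in Ioo 0 1, newTokenDensity α m h p =
      √π * α ^ (2 * m + 1) * exp α / m.factorial * (halfStableTricomiIntegral α m).toReal := by
  have hlintegral := lintegral_newTokenDensity hα m
  rw [integral_integral_eq_toReal_lintegral_lintegral (measurable_newTokenDensity α m),
    hlintegral, ENNReal.toReal_mul, ENNReal.toReal_ofReal (by positivity)]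
  · filter_upwards [ae_restrict_mem measurableSet_Ioi] with h (hh : 0 < h)
    filter_upwards [ae_restrict_mem measurableSet_Ioo] with p hp
    exact newTokenDensity_nonneg α m hh.le (Ioo_subset_Icc_self hp)
  · rw [hlintegral]
    exact ENNReal.mul_ne_top ENNReal.ofReal_ne_top (halfStableTricomiIntegral_ne_top hα m)

end NewToken

/-- Case `ℓ = 0`, `σ = 1/2` of Lemma A.1: the probability that a new token is a
previously unseen symbol under the NGGP with `σ = 1/2`. -/
theorem stmt14 (α : ℝ) (hα : 0 < α) (m : ℕ) (hm : 1 ≤ m) :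
    ∑ k ∈ Finset.Icc 1 m, Vhalf (m + 1) (k + 1) α * 2 ^ k * genFactCoeff m k (1 / 2)
      = (1 / (2 * Real.sqrt Real.pi)) *
        ∫ h in Set.Ioi (0 : ℝ), ∫ p in Set.Ioo (0 : ℝ) 1,
          h ^ (-(1 / 2) : ℝ) * fHalf (h * p) * Real.exp (-h * α ^ 2 + α) *
            p ^ m * (1 - p) ^ (-(1 / 2) : ℝ) := by
  have hdensity := integral_newTokenDensity hα m
  simp only [newTokenDensity] at hdensity
  rw [sum_vhalf_mul_genFactCoeff hα hm, hdensity]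
  field_simp
end
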